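/- Let N ≥ 2 and let e ∈ ℝ^N be the all-ones vector. Then T_N is invertible, and the vector v₀ = T_N⁻¹ e satisfies (S_N * T_N) v₀ = 0; i.e., v₀ is a right eigenvector of S_N T_N for the eigenvalue 0. -/

import Mathlib

open Matrix

/-- The `N × N` tridiagonal matrix with `2` on the diagonal and `-1` on the
sub- and superdiagonals. -/
noncomputable def Tmat (N : ℕ) : Matrix (Fin N) (Fin N) ℝ :=
  Matrix.of fun i j =>
    if i = j then 2
    else if i.val + 1 = j.val ∨ j.val + 1 = i.val then -1 else 0

/-- The `N × N` matrix equal to `Tmat N` except that the `(1,1)` and `(N,N)` entries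
are `1` instead of `2`. -/
noncomputable def Smat (N : ℕ) : Matrix (Fin N) (Fin N) ℝ :=
  Matrix.of fun i j =>
    if i = j then (if i.val = 0 ∨ i.val = N - 1 then 1 else 2)
    else if i.val + 1 = j.val ∨ j.val + 1 = i.val then -1 else 0

/-!
For `2 ≤ N`, `Smat N` is the Laplacian of the path graph on `N` vertices, so it annihilates the
constant vectors, and it remains to cancel `Tmat N * (Tmat N)⁻¹`. The matrix `Tmat N` is the same
Laplacian with `1` added to the diagonal entry at each end of the path: its quadratic form is the
Dirichlet energy plus the squares of the two boundary values, which vanishes only at `0` because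
the path is connected.
-/

open SimpleGraph

theorem posDef_lapMatrix_add_diagonal {V : Type*} [Fintype V] [DecidableEq V] (G : SimpleGraph V)
    [DecidableRel G.Adj] {d : V → ℝ} (hd : 0 ≤ d) (hG : ∀ i, ∃ j, G.Reachable i j ∧ d j ≠ 0) :
    (G.lapMatrix ℝ + diagonal d).PosDef := by
  have hL : (G.lapMatrix ℝ).PosSemidef := G.posSemidef_lapMatrix ℝ
  have hD : (diagonal d).PosSemidef := .diagonal hd
  refine .of_dotProduct_mulVec_pos (hL.add hD).isHermitian fun x hx => ?_
  refine ((hL.add hD).dotProduct_mulVec_nonneg x).lt_of_ne' fun energy_eq_zero => hx ?_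
  obtain ⟨hLx, hDx⟩ : G.lapMatrix ℝ *ᵥ x = 0 ∧ diagonal d *ᵥ x = 0 := by
    rwa [add_mulVec, dotProduct_add, add_eq_zero_iff_of_nonneg (hL.dotProduct_mulVec_nonneg x)
      (hD.dotProduct_mulVec_nonneg x), hL.dotProduct_mulVec_zero_iff,
      hD.dotProduct_mulVec_zero_iff] at energy_eq_zero
  funext i
  obtain ⟨j, hij, hdj⟩ := hG i
  have hxj : d j * x j = 0 := by rw [← mulVec_diagonal, hDx, Pi.zero_apply]
  calc x i = x j := (G.lapMatrix_mulVec_eq_zero_iff_forall_reachable.mp hLx) i j hij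
    _ = 0 := (mul_eq_zero.mp hxj).resolve_left hdj

section PathGraph

variable {N : ℕ} [DecidableRel (pathGraph N).Adj]

theorem degree_pathGraph (i : Fin N) :
    (pathGraph N).degree i = (if i.val = 0 then 0 else 1) + (if i.val + 1 = N then 0 else 1) := by
  have neighbors : ((pathGraph N).neighborFinset i).map Fin.valEmbedding =
      (if i.val = 0 then ∅ else {i.val - 1}) ∪ (if i.val + 1 = N then ∅ else {i.val + 1}) := by
    ext k
    simp only [Finset.mem_map, mem_neighborFinset, pathGraph_adj, Fin.valEmbedding_apply,
      Fin.exists_iff, exists_and_left, exists_prop, exists_eq_right_right, Finset.mem_union]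
    grind
  rw [← card_neighborFinset_eq_degree, ← Finset.card_map, neighbors, Finset.card_union_of_disjoint]
  · split_ifs <;> rfl
  · split_ifs <;> simp

theorem lapMatrix_pathGraph_apply (R : Type*) [AddGroupWithOne R] (i j : Fin N) :
    (pathGraph N).lapMatrix R i j =
      if i = j then (if i.val = 0 then 0 else 1) + (if i.val + 1 = N then 0 else 1)
      else if i.val + 1 = j.val ∨ j.val + 1 = i.val then -1 else 0 := by
  rw [lapMatrix, degMatrix, Matrix.sub_apply, adjMatrix_apply]
  obtain rfl | hij := eq_or_ne i j
  · simp [degree_pathGraph]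
  · rw [diagonal_apply_ne _ hij, if_neg hij, zero_sub, neg_ite, neg_zero]
    simp only [pathGraph_adj]

theorem Smat_eq_lapMatrix_pathGraph (hN : 2 ≤ N) : Smat N = (pathGraph N).lapMatrix ℝ := by
  ext i j
  rw [lapMatrix_pathGraph_apply, Smat, of_apply]
  split_ifs <;> first | omega | norm_num

theorem Tmat_eq_lapMatrix_pathGraph_add_diagonal :
    Tmat N = (pathGraph N).lapMatrix ℝ +
      diagonal fun i => (if i.val = 0 then 1 else 0) + (if i.val + 1 = N then 1 else 0) := by
  ext i j
  rw [Matrix.add_apply, lapMatrix_pathGraph_apply, diagonal_apply, Tmat, of_apply]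
  split_ifs <;> norm_num

end PathGraph

theorem posDef_Tmat (N : ℕ) : (Tmat N).PosDef := by
  classical
  rw [Tmat_eq_lapMatrix_pathGraph_add_diagonal]
  refine posDef_lapMatrix_add_diagonal _ (fun i => by positivity) fun i =>
    ⟨⟨0, i.pos⟩, pathGraph_preconnected N _ _, ?_⟩
  simp only [if_true]
  positivity

theorem Smat_mulVec_const_eq_zero {N : ℕ} (hN : 2 ≤ N) : Smat N *ᵥ (fun _ => 1) = 0 := by
  classical
  rw [Smat_eq_lapMatrix_pathGraph hN, lapMatrix_mulVec_const_eq_zero]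

/-- `T_N` is invertible and `v₀ = T_N⁻¹ e` is a right eigenvector of `S_N * T_N`
for the eigenvalue `0`. -/
theorem SmatTmat_right_kernel (N : ℕ) (hN : 2 ≤ N) :
    IsUnit (Tmat N).det ∧
      (Smat N * Tmat N).mulVec ((Tmat N)⁻¹.mulVec (fun _ => (1 : ℝ))) = 0 := by
  have hT : IsUnit (Tmat N).det := (isUnit_iff_isUnit_det _).mp (posDef_Tmat N).isUnit
  refine ⟨hT, ?_⟩
  rw [mulVec_mulVec, mul_nonsing_inv_cancel_right _ _ hT, Smat_mulVec_const_eq_zero hN]
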